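/- arXiv:0810.3810 — 2 statements merged into one kernel-verified Lean document; each statement's English description precedes it below -/
import Mathlib

section
/- Let u = u(t,x) be a C^2 solution of the strictly hyperbolic system ∂u/∂t + A(u) ∂u/∂x = B(u) on a domain where |u| remains in the neighborhood of 0 under consideration, and set v_i = l_i(u)u, w_i = l_i(u)u_x, b_i(u) = l_i(u)B(u). Then for each i = 1,…,n the following divergence-form identities hold: ∂v_i/∂t + ∂(λ_i(u) v_i)/∂x = Σ_{j,k=1}^n β̃_{ijk}(u) v_j w_k + Σ_{j,k=1}^n ν_{ijk}(u) v_j b_k(u) + b_i(u), and ∂w_i/∂t + ∂(λ_i(u) w_i)/∂x = Σ_{j,k=1}^n γ̃_{ijk}(u) w_j w_k + Σ_{j,k=1}^n σ_{ijk}(u) w_j b_k(u) + (b_i(u))_x, where β̃_{ijk}(u) = β_{ijk}(u) + ∇λ_i(u) r_k(u) δ_ij and γ̃_{ijk}(u) = γ_{ijk}(u) + (1/2)[∇λ_j(u) r_k(u) δ_ij + ∇λ_k(u) r_j(u) δ_ik]. -/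
open scoped ENNReal
open MeasureTheory Matrix Set Filter Topology

noncomputable section

/-- The state space `ℝⁿ`, realized as `Fin n → ℝ`. -/
abbrev V (n : ℕ) := Fin n → ℝ

/-- The Euclidean norm on `Fin n → ℝ`. -/
def eunorm {n : ℕ} (v : V n) : ℝ := Real.sqrt (∑ i, v i ^ 2)

/-- The `i`-th standard basis vector `e_i`. -/
def eb {n : ℕ} (i : Fin n) : V n := Pi.single i 1

/-- A first-order quasilinear strictly hyperbolic system
`∂u/∂t + A(u) ∂u/∂x = B(u)`, with suitably smooth coefficients on the
neighborhood `{|u| < δ}` of `u = 0`, real distinct eigenvalues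
`λ_1(u) < ⋯ < λ_n(u)` and complete systems of left/right eigenvectors
normalized by `l_i(u) r_j(u) ≡ δ_ij`, `r_i(u)ᵀ r_i(u) ≡ 1`. -/
structure HypSys (n : ℕ) where
  A : V n → Matrix (Fin n) (Fin n) ℝ
  B : V n → V n
  lam : Fin n → V n → ℝ
  l : Fin n → V n → V n
  r : Fin n → V n → V n
  δ : ℝ
  δ_pos : 0 < δ
  smooth_A : ∀ i j : Fin n, ContDiffOn ℝ (⊤ : ℕ∞) (fun u => A u i j) {u | eunorm u < δ}
  smooth_B : ContDiffOn ℝ (⊤ : ℕ∞) B {u | eunorm u < δ}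
  smooth_lam : ∀ i : Fin n, ContDiffOn ℝ (⊤ : ℕ∞) (lam i) {u | eunorm u < δ}
  smooth_l : ∀ i : Fin n, ContDiffOn ℝ (⊤ : ℕ∞) (l i) {u | eunorm u < δ}
  smooth_r : ∀ i : Fin n, ContDiffOn ℝ (⊤ : ℕ∞) (r i) {u | eunorm u < δ}
  strict_hyp : ∀ u : V n, eunorm u < δ → ∀ i j : Fin n, i < j → lam i u < lam j u
  eig_r : ∀ u : V n, eunorm u < δ → ∀ i, Matrix.mulVec (A u) (r i u) = lam i u • r i u
  eig_l : ∀ u : V n, eunorm u < δ → ∀ i, Matrix.vecMul (l i u) (A u) = lam i u • l i u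
  norm_lr : ∀ u : V n, eunorm u < δ → ∀ i j : Fin n, l i u ⬝ᵥ r j u = if i = j then 1 else 0
  norm_rr : ∀ u : V n, eunorm u < δ → ∀ i : Fin n, r i u ⬝ᵥ r i u = 1

namespace HypSys

variable {n : ℕ} (S : HypSys n)

/-- Normalized coordinates: `r_i(u_i e_i) ≡ e_i` for `|u_i|` small. -/
def Normalized : Prop := ∀ i : Fin n, ∀ s : ℝ, |s| < S.δ → S.r i (s • eb i) = eb i

/-- Matching condition for the inhomogeneous term: `B(u_i e_i) ≡ 0` for `|u_i|` small. -/
def Matching : Prop := ∀ i : Fin n, ∀ s : ℝ, |s| < S.δ → S.B (s • eb i) = 0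

/-- In normalized coordinates, `∂^k λ_i / ∂u_i^k (0)`. -/
def axisDeriv (i : Fin n) (k : ℕ) : ℝ := iteratedDeriv k (fun s : ℝ => S.lam i (s • eb i)) 0

/-- The `i`-th characteristic field is weakly linearly degenerate:
`λ_i(u_i e_i) ≡ λ_i(0)` for `|u_i|` small (in normalized coordinates). -/
def WLD (i : Fin n) : Prop := ∀ s : ℝ, |s| < S.δ → S.lam i (s • eb i) = S.lam i 0

/-- `α_i = a`: the derivatives `∂^k λ_i/∂u_i^k (0)` vanish for `k = 1, …, a`
but not for `k = a + 1`. -/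
def IsAlphaOf (i : Fin n) (a : ℕ) : Prop :=
  (∀ k : ℕ, 1 ≤ k → k ≤ a → S.axisDeriv i k = 0) ∧ S.axisDeriv i (a + 1) ≠ 0

/-- `a = α = min { α_i : i ∈ J } < ∞`, where `J` is the set of non weakly
linearly degenerate indices.  (In particular the system is not weakly
linearly degenerate.) -/
def IsMinAlpha (a : ℕ) : Prop :=
  (∃ i : Fin n, ¬ S.WLD i ∧ S.IsAlphaOf i a) ∧
    ∀ i : Fin n, ¬ S.WLD i → ∀ b : ℕ, S.IsAlphaOf i b → a ≤ b

/-- `b_i(u) = l_i(u) B(u)`. -/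
def bcoef (i : Fin n) (u : V n) : ℝ := S.l i u ⬝ᵥ S.B u

/-- `β_{ijk}(u) = (λ_k(u) − λ_i(u)) l_i(u) ∇r_j(u) r_k(u)`. -/
def beta (i j k : Fin n) (u : V n) : ℝ :=
  (S.lam k u - S.lam i u) * (S.l i u ⬝ᵥ fderiv ℝ (S.r j) u (S.r k u))

/-- `ν_{ijk}(u) = − l_i(u) ∇r_j(u) r_k(u)`. -/
def nu (i j k : Fin n) (u : V n) : ℝ := -(S.l i u ⬝ᵥ fderiv ℝ (S.r j) u (S.r k u))

/-- `γ_{ijk}(u) = (λ_k(u) − λ_j(u)) l_i(u) ∇r_j(u) r_k(u) − ∇λ_j(u) r_k(u) δ_ij`. -/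
def gamma (i j k : Fin n) (u : V n) : ℝ :=
  (S.lam k u - S.lam j u) * (S.l i u ⬝ᵥ fderiv ℝ (S.r j) u (S.r k u)) -
    (if i = j then fderiv ℝ (S.lam j) u (S.r k u) else 0)

/-- `σ_{ijk}(u) = l_i(u) (∇r_k(u) r_j(u) − ∇r_j(u) r_k(u))`. -/
def sigma (i j k : Fin n) (u : V n) : ℝ :=
  S.l i u ⬝ᵥ (fderiv ℝ (S.r k) u (S.r j u) - fderiv ℝ (S.r j) u (S.r k u))

/-- `β̃_{ijk}(u) = β_{ijk}(u) + ∇λ_i(u) r_k(u) δ_ij`. -/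
def betaT (i j k : Fin n) (u : V n) : ℝ :=
  S.beta i j k u + (if i = j then fderiv ℝ (S.lam i) u (S.r k u) else 0)

/-- `γ̃_{ijk}(u) = γ_{ijk}(u) + ½ [∇λ_j(u) r_k(u) δ_ij + ∇λ_k(u) r_j(u) δ_ik]`. -/
def gammaT (i j k : Fin n) (u : V n) : ℝ :=
  S.gamma i j k u + (1 / 2) *
    ((if i = j then fderiv ℝ (S.lam j) u (S.r k u) else 0) +
     (if i = k then fderiv ℝ (S.lam k) u (S.r j u) else 0))

/-- `b̃_{ik}(u) = Σ_l (∂b_i/∂u_l)(u) r_{kl}(u)`. -/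
def btilde (i k : Fin n) (u : V n) : ℝ :=
  ∑ m : Fin n, fderiv ℝ (S.bcoef i) u (Pi.single m 1) * S.r k u m

/-- `u` is a `C¹` solution of the Cauchy problem on `[0,T] × ℝ`, with initial
data `u0`, staying in the neighborhood `{|u| < δ}` of `u = 0`. -/
structure IsSolutionOn (u : ℝ → ℝ → V n) (u0 : ℝ → V n) (T : ℝ) : Prop where
  smooth : ContDiffOn ℝ 1 (fun p : ℝ × ℝ => u p.1 p.2) (Icc 0 T ×ˢ univ)
  small : ∀ t ∈ Icc (0 : ℝ) T, ∀ x : ℝ, eunorm (u t x) < S.δ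
  pde : ∀ t ∈ Icc (0 : ℝ) T, ∀ x : ℝ,
    derivWithin (fun s => u s x) (Icc 0 T) t +
      Matrix.mulVec (S.A (u t x)) (deriv (fun y => u t y) x) = S.B (u t x)
  init : ∀ x : ℝ, u 0 x = u0 x

/-- The lifespan `T̃` of the Cauchy problem with initial data `u0`
(as an extended nonnegative real). -/
def lifespan (u0 : ℝ → V n) : ℝ≥0∞ :=
  ⨆ (T : ℝ) (_ : ∃ u : ℝ → ℝ → V n, S.IsSolutionOn u u0 T), ENNReal.ofReal T

/-- `v_i = l_i(u) u`. -/
def vC (u : ℝ → ℝ → V n) (i : Fin n) (t x : ℝ) : ℝ := S.l i (u t x) ⬝ᵥ u t x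

/-- `w_i = l_i(u) u_x`. -/
def wC (u : ℝ → ℝ → V n) (i : Fin n) (t x : ℝ) : ℝ :=
  S.l i (u t x) ⬝ᵥ deriv (fun y => u t y) x

/-- `v = (v_1, …, v_n)`. -/
def vV (u : ℝ → ℝ → V n) (t x : ℝ) : V n := fun i => S.vC u i t x

/-- `w = (w_1, …, w_n)`. -/
def wV (u : ℝ → ℝ → V n) (t x : ℝ) : V n := fun i => S.wC u i t x

/-- `U_∞(T) = sup_{0≤t≤T} sup_x |u(t,x)|`. -/
def Uinf (_S : HypSys n) (u : ℝ → ℝ → V n) (T : ℝ) : ℝ :=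
  ⨆ p : Icc (0 : ℝ) T × ℝ, eunorm (u p.1.1 p.2)

/-- `V_∞(T) = sup_{0≤t≤T} sup_x |v(t,x)|`. -/
def Vinf (u : ℝ → ℝ → V n) (T : ℝ) : ℝ :=
  ⨆ p : Icc (0 : ℝ) T × ℝ, eunorm (S.vV u p.1.1 p.2)

/-- `W_∞(T) = sup_{0≤t≤T} sup_x |w(t,x)|`. -/
def Winf (u : ℝ → ℝ → V n) (T : ℝ) : ℝ :=
  ⨆ p : Icc (0 : ℝ) T × ℝ, eunorm (S.wV u p.1.1 p.2)

/-- `V_1(T) = sup_{0≤t≤T} ∫_ℝ |v(t,x)| dx`. -/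
def V1 (u : ℝ → ℝ → V n) (T : ℝ) : ℝ :=
  ⨆ t : Icc (0 : ℝ) T, ∫ x : ℝ, eunorm (S.vV u t.1 x)

/-- `W_1(T) = sup_{0≤t≤T} ∫_ℝ |w(t,x)| dx`. -/
def W1 (u : ℝ → ℝ → V n) (T : ℝ) : ℝ :=
  ⨆ t : Icc (0 : ℝ) T, ∫ x : ℝ, eunorm (S.wV u t.1 x)

/-- `ξ` is a `j`-th characteristic curve on `[0,T]`:  `ξ'(t) = λ_j(u(t, ξ(t)))`. -/
def IsChar (u : ℝ → ℝ → V n) (j : Fin n) (T : ℝ) (ξ : ℝ → ℝ) : Prop :=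
  ∀ t ∈ Icc (0 : ℝ) T, HasDerivWithinAt ξ (S.lam j (u t (ξ t))) (Icc 0 T) t

/-- `Ṽ_1(T) = max_{i≠j} sup_{C̃_j} ∫_{C̃_j} |v_i| dt`. -/
def V1t (u : ℝ → ℝ → V n) (T : ℝ) : ℝ :=
  sSup {A : ℝ | ∃ i j : Fin n, i ≠ j ∧ ∃ ξ : ℝ → ℝ, S.IsChar u j T ξ ∧
    A = ∫ t in Icc (0 : ℝ) T, |S.vC u i t (ξ t)|}

/-- `W̃_1(T) = max_{i≠j} sup_{C̃_j} ∫_{C̃_j} |w_i| dt`. -/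
def W1t (u : ℝ → ℝ → V n) (T : ℝ) : ℝ :=
  sSup {A : ℝ | ∃ i j : Fin n, i ≠ j ∧ ∃ ξ : ℝ → ℝ, S.IsChar u j T ξ ∧
    A = ∫ t in Icc (0 : ℝ) T, |S.wC u i t (ξ t)|}

/-- `Q_W(T) = Σ_{j≠k} ∫∫ |w_j||w_k|`. -/
def QW (u : ℝ → ℝ → V n) (T : ℝ) : ℝ :=
  ∑ j : Fin n, ∑ k : Fin n, if j = k then 0 else
    ∫ t in Icc (0 : ℝ) T, ∫ x : ℝ, |S.wC u j t x| * |S.wC u k t x|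

/-- `Q_{VW}(T) = Σ_{j≠k} ∫∫ |v_j||w_k|`. -/
def QVW (u : ℝ → ℝ → V n) (T : ℝ) : ℝ :=
  ∑ j : Fin n, ∑ k : Fin n, if j = k then 0 else
    ∫ t in Icc (0 : ℝ) T, ∫ x : ℝ, |S.vC u j t x| * |S.wC u k t x|

/-- `Q_V(T) = Σ_{j≠k} ∫∫ |v_j||v_k|`. -/
def QV (u : ℝ → ℝ → V n) (T : ℝ) : ℝ :=
  ∑ j : Fin n, ∑ k : Fin n, if j = k then 0 else
    ∫ t in Icc (0 : ℝ) T, ∫ x : ℝ, |S.vC u j t x| * |S.vC u k t x|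

/-- The coefficient `a_0(t;i,y) = γ_{iii}(u)` of the Riccati equation (5.5),
evaluated at `(t,x)`. -/
def ricA0 (u : ℝ → ℝ → V n) (i : Fin n) (t x : ℝ) : ℝ := S.gamma i i i (u t x)

/-- The coefficient `a_1(t;i,y)` of the Riccati equation (5.5), evaluated at `(t,x)`. -/
def ricA1 (u : ℝ → ℝ → V n) (i : Fin n) (t x : ℝ) : ℝ :=
  (∑ j : Fin n, if j = i then 0 else
      (S.gamma i i j (u t x) + S.gamma i j i (u t x)) * S.wC u j t x)
  + (∑ j : Fin n, S.sigma i j i (u t x) * S.bcoef j (u t x))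
  + (S.btilde i i (u t x) - S.btilde i i ((u t x i) • eb i))

/-- The coefficient `a_2(t;i,y)` of the Riccati equation (5.5), evaluated at `(t,x)`. -/
def ricA2 (u : ℝ → ℝ → V n) (i : Fin n) (t x : ℝ) : ℝ :=
  (∑ j : Fin n, ∑ k : Fin n, if j = k ∨ j = i ∨ k = i then 0 else
      S.gamma i j k (u t x) * S.wC u j t x * S.wC u k t x)
  + (∑ j : Fin n, ∑ k : Fin n, if k = i then 0 else
      S.sigma i j k (u t x) * S.bcoef j (u t x) * S.wC u k t x)
  + (∑ k : Fin n, if k = i then 0 else S.btilde i k (u t x) * S.wC u k t x)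

/-- `u` is a `C¹` solution of the system on the open set `Ω`, with values in
the neighborhood `{|u| < δ}`. -/
structure IsSol1On (u : ℝ → ℝ → V n) (Ω : Set (ℝ × ℝ)) : Prop where
  isOpen : IsOpen Ω
  smooth : ContDiffOn ℝ 1 (fun p : ℝ × ℝ => u p.1 p.2) Ω
  small : ∀ p ∈ Ω, eunorm (u p.1 p.2) < S.δ
  pde : ∀ p ∈ Ω, deriv (fun s => u s p.2) p.1 +
    Matrix.mulVec (S.A (u p.1 p.2)) (deriv (fun y => u p.1 y) p.2) = S.B (u p.1 p.2)

/-- `u` is a `C²` solution of the system on the open set `Ω`, with values in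
the neighborhood `{|u| < δ}`. -/
structure IsSol2On (u : ℝ → ℝ → V n) (Ω : Set (ℝ × ℝ)) : Prop where
  isOpen : IsOpen Ω
  smooth : ContDiffOn ℝ 2 (fun p : ℝ × ℝ => u p.1 p.2) Ω
  small : ∀ p ∈ Ω, eunorm (u p.1 p.2) < S.δ
  pde : ∀ p ∈ Ω, deriv (fun s => u s p.2) p.1 +
    Matrix.mulVec (S.A (u p.1 p.2)) (deriv (fun y => u p.1 y) p.2) = S.B (u p.1 p.2)

end HypSys

/-- The family of initial data `u(0,x) = f(ε,x)`: `f` is `C¹` in `(ε,x)`,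
`f(0,x) ≡ 0`, `∂²f/∂ε∂x(·,x)` is uniformly `C^r` (Hölder) on `[0,ε₁]`,
`ψ(x) = ∂f/∂ε(0,x)` is `C¹`, and `M = sup_x |ψ'(x)| < ∞`. -/
structure InitData (n : ℕ) where
  f : ℝ → ℝ → V n
  ε₁ : ℝ
  ε₁_pos : 0 < ε₁
  rexp : ℝ
  rexp_pos : 0 < rexp
  rexp_le_one : rexp ≤ 1
  smooth : ContDiff ℝ 1 (fun p : ℝ × ℝ => f p.1 p.2)
  zero : ∀ x : ℝ, f 0 x = 0
  psi_smooth : ContDiff ℝ 1 (fun x : ℝ => deriv (fun e => f e x) 0)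
  M_bdd : BddAbove (Set.range fun x : ℝ =>
    eunorm (deriv (fun x' : ℝ => deriv (fun e => f e x') 0) x))
  holder : ∃ CH : ℝ, ∀ x ε ε' : ℝ, ε ∈ Set.Icc 0 ε₁ → ε' ∈ Set.Icc 0 ε₁ →
    eunorm (deriv (fun e => deriv (fun y => f e y) x) ε
      - deriv (fun e => deriv (fun y => f e y) x) ε') ≤ CH * |ε - ε'| ^ rexp

namespace InitData

variable {n : ℕ} (D : InitData n)

/-- `ψ(x) = ∂f/∂ε(0,x)`. -/
def psi : ℝ → V n := fun x => deriv (fun e => D.f e x) 0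

/-- `M = sup_x |ψ'(x)|`. -/
def M : ℝ := ⨆ x : ℝ, eunorm (deriv D.psi x)

/-- The smallness conditions (1.17) on the initial data:
`∫|∂f/∂x(ε,·)| ≤ K₁ ε` and `∫|f(ε,·)| ≤ K₂ ε / (M+1)`. -/
def Small (K1 K2 ε : ℝ) : Prop :=
  Integrable (fun x : ℝ => eunorm (deriv (fun y => D.f ε y) x)) ∧
  Integrable (fun x : ℝ => eunorm (D.f ε x)) ∧
  (∫ x : ℝ, eunorm (deriv (fun y => D.f ε y) x)) ≤ K1 * ε ∧
  (∫ x : ℝ, eunorm (D.f ε x)) ≤ K2 / (D.M + 1) * ε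

end InitData

/-- The right-hand side of the sharp lifespan formula (1.26):
`max_{i∈J₁} sup_{x∈ℝ} ( −(1/α!) ∂^{α+1}λ_i/∂u_i^{α+1}(0) ψ_i(x)^α ψ_i'(x) )`. -/
def blowRate {n : ℕ} (S : HypSys n) (D : InitData n) (a : ℕ) : ℝ :=
  ⨆ i : {i : Fin n // ¬ S.WLD i ∧ S.IsAlphaOf i a}, ⨆ x : ℝ,
    (-(1 / (Nat.factorial a : ℝ)) * S.axisDeriv i.1 (a + 1) * (D.psi x) i.1 ^ a *
      deriv (fun x' => (D.psi x') i.1) x)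

theorem aux_eunorm_open {n : ℕ} (d : ℝ) : IsOpen {u : V n | eunorm u < d} := by
  have h : Continuous (eunorm : V n → ℝ) := by
    unfold eunorm
    fun_prop
  exact isOpen_lt h continuous_const

theorem aux_dot_deriv {n : ℕ} {f g : ℝ → V n} {f' g' : V n} {x : ℝ}
    (hf : HasDerivAt f f' x) (hg : HasDerivAt g g' x) :
    HasDerivAt (fun y => f y ⬝ᵥ g y) (f' ⬝ᵥ g x + f x ⬝ᵥ g') x := by
  have h1 := fun i => hasDerivAt_pi.1 hf i
  have h2 := fun i => hasDerivAt_pi.1 hg i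
  have h := HasDerivAt.fun_sum (u := Finset.univ) (fun i _ => (h1 i).mul (h2 i))
  simp only [dotProduct, ← Finset.sum_add_distrib]
  exact h

theorem aux_expand {n : ℕ} (S : HypSys n) (u : V n) (hu : eunorm u < S.δ) (x : V n) :
    x = ∑ j, (S.l j u ⬝ᵥ x) • S.r j u := by
  have h : (Matrix.of fun i k => S.l i u k) * (Matrix.of fun k j => S.r j u k) = 1 := by
    ext i j
    have := S.norm_lr u hu i j
    simpa [Matrix.mul_apply, Matrix.one_apply, dotProduct] using this
  have h2 := mul_eq_one_comm.1 h
  have h3 : ((Matrix.of fun k j => S.r j u k) * (Matrix.of fun i k => S.l i u k)).mulVec x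
      = (1 : Matrix (Fin n) (Fin n) ℝ).mulVec x := by rw [h2]
  rw [Matrix.one_mulVec, ← Matrix.mulVec_mulVec] at h3
  rw [← h3]
  ext m
  simp only [Matrix.mulVec, dotProduct, Matrix.of_apply, Finset.sum_apply, Pi.smul_apply,
    smul_eq_mul]
  have h4 := congrFun h3
  refine Finset.sum_congr rfl fun j _ => ?_
  rw [mul_comm]
  congr 1
  refine Finset.sum_congr rfl fun k _ => ?_
  congr 1
  exact (h4 k).symm

theorem aux_smooth_diff {n : ℕ} {S : HypSys n} {F : Type*} [NormedAddCommGroup F]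
    [NormedSpace ℝ F] {f : V n → F} (hf : ContDiffOn ℝ (⊤ : ℕ∞) f {u | eunorm u < S.δ})
    {u : V n} (hu : eunorm u < S.δ) : HasFDerivAt f (fderiv ℝ f u) u :=
  ((hf.contDiffAt ((aux_eunorm_open S.δ).mem_nhds hu)).differentiableAt (by simp)).hasFDerivAt

theorem aux_dual {n : ℕ} (S : HypSys n) (u : V n) (hu : eunorm u < S.δ) (i j : Fin n)
    (h : V n) : fderiv ℝ (S.l i) u h ⬝ᵥ S.r j u = -(S.l i u ⬝ᵥ fderiv ℝ (S.r j) u h) := by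
  have hc : HasDerivAt (fun s : ℝ => u + s • h) h 0 := by
    simpa using ((hasDerivAt_id (0 : ℝ)).smul_const h).const_add u
  have e0 : u + (0 : ℝ) • h = u := by simp
  have hl := HasFDerivAt.comp_hasDerivAt_of_eq (0 : ℝ) (aux_smooth_diff (S.smooth_l i) hu) hc e0.symm
  have hr := HasFDerivAt.comp_hasDerivAt_of_eq (0 : ℝ) (aux_smooth_diff (S.smooth_r j) hu) hc e0.symm
  have hd := aux_dot_deriv hl hr
  have hev : (fun s : ℝ => (S.l i ∘ fun s : ℝ => u + s • h) s ⬝ᵥ (S.r j ∘ fun s : ℝ => u + s • h) s)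
      =ᶠ[𝓝 0] fun _ => if i = j then (1 : ℝ) else 0 := by
    have : ∀ᶠ s in 𝓝 (0 : ℝ), eunorm (u + s • h) < S.δ := by
      have hm : {w : V n | eunorm w < S.δ} ∈ 𝓝 (u + (0 : ℝ) • h) := by
        rw [e0]; exact (aux_eunorm_open S.δ).mem_nhds hu
      exact hc.continuousAt.preimage_mem_nhds hm
    filter_upwards [this] with s hs
    exact S.norm_lr _ hs i j
  have := hd.unique ((hasDerivAt_const (0 : ℝ) (if i = j then (1 : ℝ) else 0)).congr_of_eventuallyEq hev)
  simp only [Function.comp, e0] at this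
  linarith

theorem aux_lin {n : ℕ} (S : HypSys n) (u : V n) (hu : eunorm u < S.δ)
    {F : Type*} [NormedAddCommGroup F] [NormedSpace ℝ F] (D : V n →L[ℝ] F) (h : V n) :
    D h = ∑ k, (S.l k u ⬝ᵥ h) • D (S.r k u) := by
  conv_lhs => rw [aux_expand S u hu h]
  simp

theorem aux_dl {n : ℕ} (S : HypSys n) (u : V n) (hu : eunorm u < S.δ) (i : Fin n)
    (h a : V n) : fderiv ℝ (S.l i) u h ⬝ᵥ a =
      -∑ j, ∑ k, (S.l j u ⬝ᵥ a) * (S.l k u ⬝ᵥ h) * (S.l i u ⬝ᵥ fderiv ℝ (S.r j) u (S.r k u)) := by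
  conv_lhs => rw [aux_expand S u hu a]
  rw [dotProduct_sum, ← Finset.sum_neg_distrib]
  refine Finset.sum_congr rfl fun j _ => ?_
  rw [dotProduct_smul, aux_dual S u hu, aux_lin S u hu (fderiv ℝ (S.r j) u) h, dotProduct_sum]
  simp only [dotProduct_smul, smul_eq_mul, mul_neg, Finset.mul_sum, mul_assoc]

theorem aux_alg1 {n : ℕ} (i : Fin n) (L : Fin n → Fin n → ℝ) (v w b lam d : Fin n → ℝ) :
    (-∑ j, ∑ k, v j * (b k - lam k * w k) * L j k) + (b i - lam i * w i) +
      ((∑ k, w k * d k) * v i + lam i * ((-∑ j, ∑ k, v j * w k * L j k) + w i)) =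
    (∑ j, ∑ k, ((lam k - lam i) * L j k + (if i = j then d k else 0)) * v j * w k) +
      (∑ j, ∑ k, (-(L j k)) * v j * b k) + b i := by
  have h1 : (∑ k, w k * d k) * v i = ∑ j, ∑ k, (if i = j then d k else 0) * v j * w k := by
    symm
    rw [Finset.sum_eq_single i]
    · rw [Finset.sum_mul]
      refine Finset.sum_congr rfl fun k _ => ?_
      simp only [if_true]; ring
    · intro j _ hj
      simp [Ne.symm hj]
    · simp
  have h2 : (-∑ j, ∑ k, v j * (b k - lam k * w k) * L j k) +
      lam i * (-∑ j, ∑ k, v j * w k * L j k) = (∑ j, ∑ k, (lam k - lam i) * L j k * v j * w k) +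
      (∑ j, ∑ k, (-(L j k)) * v j * b k) := by
    simp only [← Finset.sum_neg_distrib, Finset.mul_sum, ← Finset.sum_add_distrib]
    refine Finset.sum_congr rfl fun j _ => Finset.sum_congr rfl fun k _ => ?_
    ring
  have h3 : (∑ j, ∑ k, ((lam k - lam i) * L j k + (if i = j then d k else 0)) * v j * w k) =
      (∑ j, ∑ k, (lam k - lam i) * L j k * v j * w k) +
      ∑ j, ∑ k, (if i = j then d k else 0) * v j * w k := by
    simp only [← Finset.sum_add_distrib]
    refine Finset.sum_congr rfl fun j _ => Finset.sum_congr rfl fun k _ => ?_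
    ring
  rw [h3, h1]
  linarith

theorem aux_alg2 {n : ℕ} (i : Fin n) (L d : Fin n → Fin n → ℝ) (w b lam : Fin n → ℝ) :
    (-∑ j, ∑ k, w j * (b k - lam k * w k) * L j k) -
      (-∑ j, ∑ k, (b j - lam j * w j) * w k * L j k) =
    (∑ j, ∑ k, ((lam k - lam j) * L j k - (if i = j then d j k else 0) +
        (1 / 2) * ((if i = j then d j k else 0) + (if i = k then d k j else 0))) * w j * w k) +
      (∑ j, ∑ k, (L k j - L j k) * w j * b k) := by
  have h1 : (∑ j, ∑ k, (if i = j then d j k else 0) * w j * w k) =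
      ∑ j, ∑ k, (if i = k then d k j else 0) * w j * w k := by
    rw [Finset.sum_comm]
    refine Finset.sum_congr rfl fun j _ => Finset.sum_congr rfl fun k _ => ?_
    ring
  have h2 : (∑ j, ∑ k, L k j * w j * b k) = ∑ j, ∑ k, L j k * w k * b j := by
    rw [Finset.sum_comm]
  have h3 : (∑ j, ∑ k, ((lam k - lam j) * L j k - (if i = j then d j k else 0) +
        (1 / 2) * ((if i = j then d j k else 0) + (if i = k then d k j else 0))) * w j * w k) =
      (∑ j, ∑ k, (lam k - lam j) * L j k * w j * w k) -
      (1 / 2) * (∑ j, ∑ k, (if i = j then d j k else 0) * w j * w k) +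
      (1 / 2) * (∑ j, ∑ k, (if i = k then d k j else 0) * w j * w k) := by
    simp only [Finset.mul_sum, ← Finset.sum_add_distrib, ← Finset.sum_sub_distrib]
    refine Finset.sum_congr rfl fun j _ => Finset.sum_congr rfl fun k _ => ?_
    ring
  have h4 : (∑ j, ∑ k, (L k j - L j k) * w j * b k) = (∑ j, ∑ k, L k j * w j * b k) -
      ∑ j, ∑ k, L j k * w j * b k := by
    simp only [← Finset.sum_sub_distrib, sub_mul]
  rw [h3, h4, h1, h2]
  have h5 : (-∑ j, ∑ k, w j * (b k - lam k * w k) * L j k) -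
      (-∑ j, ∑ k, (b j - lam j * w j) * w k * L j k) =
      (∑ j, ∑ k, (lam k - lam j) * L j k * w j * w k) +
      ((∑ j, ∑ k, L j k * w k * b j) - ∑ j, ∑ k, L j k * w j * b k) := by
    simp only [← Finset.sum_neg_distrib, ← Finset.sum_add_distrib, ← Finset.sum_sub_distrib]
    refine Finset.sum_congr rfl fun j _ => Finset.sum_congr rfl fun k _ => ?_
    ring
  rw [h5]; ring

theorem aux_snd {n : ℕ} {G : ℝ × ℝ → (ℝ × ℝ →L[ℝ] V n)} {G' : ℝ × ℝ →L[ℝ] (ℝ × ℝ →L[ℝ] V n)}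
    {c : ℝ → ℝ × ℝ} {c' : ℝ × ℝ} {s : ℝ} (hG : HasFDerivAt G G' (c s)) (hc : HasDerivAt c c' s)
    (e : ℝ × ℝ) : HasDerivAt (fun s' => G (c s') e) (G' c' e) s :=
  (ContinuousLinearMap.apply ℝ (V n) e).hasFDerivAt.comp_hasDerivAt s (hG.comp_hasDerivAt s hc)

theorem aux_curve {n : ℕ} {G : ℝ × ℝ → V n} {G' : ℝ × ℝ →L[ℝ] V n}
    {c : ℝ → ℝ × ℝ} {c' : ℝ × ℝ} {s : ℝ} (hG : HasFDerivAt G G' (c s)) (hc : HasDerivAt c c' s) :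
    HasDerivAt (fun s' => G (c s')) (G' c') s :=
  hG.comp_hasDerivAt s hc

/-- **The divergence-form decompositions (2.12) and (2.14)**.  For a `C²`
solution `u` of the strictly hyperbolic system staying in the neighborhood of
`u = 0`, with `v_i = l_i(u)u`, `w_i = l_i(u)u_x`, `b_i(u) = l_i(u)B(u)`:
`∂v_i/∂t + ∂(λ_i(u)v_i)/∂x = Σ_{jk} β̃_{ijk}(u) v_j w_k + Σ_{jk} ν_{ijk}(u) v_j b_k(u) + b_i(u)` and
`∂w_i/∂t + ∂(λ_i(u)w_i)/∂x = Σ_{jk} γ̃_{ijk}(u) w_j w_k + Σ_{jk} σ_{ijk}(u) w_j b_k(u) + (b_i(u))_x`. -/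
theorem stmt13 {n : ℕ} (S : HypSys n) (u : ℝ → ℝ → V n) (Ω : Set (ℝ × ℝ))
    (hu : S.IsSol2On u Ω) :
    ∀ i : Fin n, ∀ p ∈ Ω,
      (deriv (fun s => S.vC u i s p.2) p.1 +
          deriv (fun y => S.lam i (u p.1 y) * S.vC u i p.1 y) p.2 =
        (∑ j : Fin n, ∑ k : Fin n,
            S.betaT i j k (u p.1 p.2) * S.vC u j p.1 p.2 * S.wC u k p.1 p.2) +
          (∑ j : Fin n, ∑ k : Fin n,
            S.nu i j k (u p.1 p.2) * S.vC u j p.1 p.2 * S.bcoef k (u p.1 p.2)) +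
          S.bcoef i (u p.1 p.2)) ∧
      (deriv (fun s => S.wC u i s p.2) p.1 +
          deriv (fun y => S.lam i (u p.1 y) * S.wC u i p.1 y) p.2 =
        (∑ j : Fin n, ∑ k : Fin n,
            S.gammaT i j k (u p.1 p.2) * S.wC u j p.1 p.2 * S.wC u k p.1 p.2) +
          (∑ j : Fin n, ∑ k : Fin n,
            S.sigma i j k (u p.1 p.2) * S.wC u j p.1 p.2 * S.bcoef k (u p.1 p.2)) +
          deriv (fun y => S.bcoef i (u p.1 y)) p.2) := by
  intro i p hp
  obtain ⟨t, x⟩ := p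
  simp only
  set U : ℝ × ℝ → V n := fun p => u p.1 p.2 with hU
  have hΩ : ∀ q ∈ Ω, Ω ∈ 𝓝 q := fun q hq => hu.isOpen.mem_nhds hq
  have hC2 : ∀ q ∈ Ω, ContDiffAt ℝ 2 U q := fun q hq => hu.smooth.contDiffAt (hΩ q hq)
  have hUd : ∀ q ∈ Ω, HasFDerivAt U (fderiv ℝ U q) q := fun q hq =>
    ((hC2 q hq).differentiableAt (by simp)).hasFDerivAt
  have hcx : ∀ s y : ℝ, HasDerivAt (fun y' : ℝ => (s, y')) ((0 : ℝ), (1 : ℝ)) y := fun s y =>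
    (hasDerivAt_const y s).prodMk (hasDerivAt_id y)
  have hct : ∀ s y : ℝ, HasDerivAt (fun s' : ℝ => (s', y)) ((1 : ℝ), (0 : ℝ)) s := fun s y =>
    (hasDerivAt_id s).prodMk (hasDerivAt_const s y)
  have hux : ∀ s y, (s, y) ∈ Ω → HasDerivAt (fun y' => u s y') (fderiv ℝ U (s, y) (0, 1)) y :=
    fun s y h => aux_curve (c := fun y' : ℝ => (s, y')) (hUd _ h) (hcx s y)
  have hut : ∀ s y, (s, y) ∈ Ω → HasDerivAt (fun s' => u s' y) (fderiv ℝ U (s, y) (1, 0)) s :=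
    fun s y h => aux_curve (c := fun s' : ℝ => (s', y)) (hUd _ h) (hct s y)
  have hsm : ∀ s y, (s, y) ∈ Ω → eunorm (u s y) < S.δ := fun s y h => hu.small _ h
  have h0 := hsm t x hp
  have hch : ∀ s y, (s, y) ∈ Ω → ∀ k, S.l k (u s y) ⬝ᵥ fderiv ℝ U (s, y) (1, 0) =
      S.bcoef k (u s y) - S.lam k (u s y) * S.wC u k s y := by
    intro s y h k
    have hp := hu.pde _ h
    simp only at hp
    rw [(hut s y h).deriv] at hp
    rw [eq_sub_of_add_eq hp, dotProduct_sub, dotProduct_mulVec, S.eig_l _ (hsm s y h),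
      smul_dotProduct]
    rfl
  have hw : ∀ s y, (s, y) ∈ Ω → ∀ k, S.l k (u s y) ⬝ᵥ fderiv ℝ U (s, y) (0, 1) =
      S.wC u k s y := by
    intro s y h k
    unfold HypSys.wC
    rw [(hux s y h).deriv]
  have hevx : ∀ᶠ y in 𝓝 x, (t, y) ∈ Ω :=
    (hcx t x).continuousAt.preimage_mem_nhds (hΩ _ hp)
  have hevt : ∀ᶠ s in 𝓝 t, (s, x) ∈ Ω :=
    (hct t x).continuousAt.preimage_mem_nhds (hΩ _ hp)
  have hDD : HasFDerivAt (fderiv ℝ U) (fderiv ℝ (fderiv ℝ U) (t, x)) (t, x) :=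
    (((hC2 _ hp).fderiv_right (m := 1) (by norm_num)).differentiableAt (by simp)).hasFDerivAt
  have hsymm : IsSymmSndFDerivAt ℝ U (t, x) := (hC2 _ hp).isSymmSndFDerivAt (by simp)
  have hlx := (aux_smooth_diff (S.smooth_l i) h0).comp_hasDerivAt x (hux t x hp)
  have hlt := (aux_smooth_diff (S.smooth_l i) h0).comp_hasDerivAt t (hut t x hp)
  have hlam := (aux_smooth_diff (S.smooth_lam i) h0).comp_hasDerivAt x (hux t x hp)
  have hB := (aux_smooth_diff S.smooth_B h0).comp_hasDerivAt x (hux t x hp)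
  constructor
  · have d1 : HasDerivAt (fun s => S.vC u i s x) _ t := aux_dot_deriv hlt (hut t x hp)
    have d2 : HasDerivAt (fun y => S.vC u i t y) _ x := aux_dot_deriv hlx (hux t x hp)
    have d3 : HasDerivAt (fun y => S.lam i (u t y) * S.vC u i t y) _ x := hlam.mul d2
    rw [d1.deriv, d3.deriv]
    simp only [Function.comp]
    rw [aux_dl S _ h0, aux_dl S _ h0, aux_lin S _ h0 (fderiv ℝ (S.lam i) (u t x))]
    simp only [hch t x hp, hw t x hp, smul_eq_mul]
    exact aux_alg1 i (fun j k => S.l i (u t x) ⬝ᵥ fderiv ℝ (S.r j) (u t x) (S.r k (u t x)))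
      (fun j => S.vC u j t x) (fun j => S.wC u j t x) (fun j => S.bcoef j (u t x))
      (fun j => S.lam j (u t x)) (fun k => fderiv ℝ (S.lam i) (u t x) (S.r k (u t x)))
  · have ht2 : HasDerivAt (fun s => fderiv ℝ U (s, x) (0, 1))
        (fderiv ℝ (fderiv ℝ U) (t, x) (1, 0) (0, 1)) t := 
      aux_snd (c := fun z : ℝ => (z, x)) hDD (hct t x) ((0 : ℝ), (1 : ℝ))
    have hx2 : HasDerivAt (fun y => fderiv ℝ U (t, y) (1, 0))
        (fderiv ℝ (fderiv ℝ U) (t, x) (0, 1) (1, 0)) x := 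
      aux_snd (c := fun z : ℝ => (t, z)) hDD (hcx t x) ((1 : ℝ), (0 : ℝ))
    have hx3 : HasDerivAt (fun y => fderiv ℝ U (t, y) (0, 1))
        (fderiv ℝ (fderiv ℝ U) (t, x) (0, 1) (0, 1)) x := 
      aux_snd (c := fun z : ℝ => (t, z)) hDD (hcx t x) ((0 : ℝ), (1 : ℝ))
    have d1 := aux_dot_deriv hlt ht2
    have d1' : HasDerivAt (fun s => S.wC u i s x) _ t :=
      d1.congr_of_eventuallyEq (by
        filter_upwards [hevt] with s hs
        exact (hw s x hs i).symm)
    have d2 := aux_dot_deriv hlx hx2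
    have d3 := aux_dot_deriv hlx hx3
    have d3' : HasDerivAt (fun y => S.wC u i t y) _ x :=
      d3.congr_of_eventuallyEq (by
        filter_upwards [hevx] with y hy
        exact (hw t y hy i).symm)
    have d4 : HasDerivAt (fun y => S.lam i (u t y) * S.wC u i t y) _ x := hlam.mul d3'
    have d5 : HasDerivAt (fun y => S.bcoef i (u t y)) _ x := aux_dot_deriv hlx hB
    have d6 := (d5.differentiableAt.hasDerivAt.sub d4.differentiableAt.hasDerivAt).congr_of_eventuallyEq (f₁ := fun y =>
        (S.l i ∘ fun y' => u t y') y ⬝ᵥ fderiv ℝ U (t, y) (1, 0)) (by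
        filter_upwards [hevx] with y hy
        exact hch t y hy i)
    have key := d2.unique d6
    rw [hsymm (0, 1) (1, 0)] at key
    rw [d1'.deriv]
    simp only [Function.comp] at key ⊢
    have alg := aux_alg2 i
      (fun j k => S.l i (u t x) ⬝ᵥ fderiv ℝ (S.r j) (u t x) (S.r k (u t x)))
      (fun j k => fderiv ℝ (S.lam j) (u t x) (S.r k (u t x)))
      (fun j => S.wC u j t x) (fun j => S.bcoef j (u t x)) (fun j => S.lam j (u t x))
    rw [aux_dl S _ h0] at key ⊢
    simp only [hch t x hp, hw t x hp] at key ⊢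
    simp only [HypSys.gammaT, HypSys.gamma, HypSys.sigma, dotProduct_sub]
    linarith
end
end

section
/- Suppose the coordinates u are normalized and the inhomogeneous term B(u) satisfies the matching condition. Then for each i = 1,…,n and all |u| small, the function b_i(u) = l_i(u)B(u) admits a representation b_i(u) = Σ_{j≠k} b_{ijk}(u) u_j u_k, where each b_{ijk} is a C^1 function of u. -/
open scoped ENNReal
open MeasureTheory Matrix Set Filter Topology

noncomputable section

theorem aux_param {E : Type} [NormedAddCommGroup E] [NormedSpace ℝ E] [FiniteDimensional ℝ E]
    (m : ℕ) : ∀ {G : Type} [NormedAddCommGroup G] [NormedSpace ℝ G] (F : E × ℝ → G),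
    ContDiff ℝ m F → ContDiff ℝ m (fun x => ∫ t in (0:ℝ)..1, F (x, t)) := by
  induction m with
  | zero =>
    intro G _ _ F hF
    have hc : Continuous F := hF.continuous
    refine contDiff_zero.2 ?_
    exact intervalIntegral.continuous_parametric_intervalIntegral_of_continuous'
      (f := fun x t => F (x, t)) hc 0 1
  | succ m ih =>
    intro G _ _ F hF
    have hF1 : ContDiff ℝ ((m : WithTop ℕ∞) + 1) F := by exact_mod_cast hF
    have hc : Continuous F := hF.continuous
    have hd : Differentiable ℝ F := hF1.differentiable (by simp)
    have hfd : ContDiff ℝ m (fderiv ℝ F) := (contDiff_succ_iff_fderiv.1 hF1).2.2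
    let F' : E × ℝ → (E →L[ℝ] G) := fun p => (fderiv ℝ F p).comp (ContinuousLinearMap.inl ℝ E ℝ)
    have hF' : ContDiff ℝ m F' := hfd.clm_comp contDiff_const
    have hcF' : Continuous F' := hF'.continuous
    refine contDiff_succ_iff_hasFDerivAt.2 ⟨fun x => ∫ t in (0:ℝ)..1, F' (x, t), ih F' hF', ?_⟩
    intro x
    have : ProperSpace E := FiniteDimensional.proper ℝ E
    obtain ⟨C, hC⟩ := ((isCompact_closedBall x 1).prod
      (isCompact_Icc (a := (0:ℝ)) (b := 1))).exists_bound_of_continuousOn hcF'.continuousOn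
    refine intervalIntegral.hasFDerivAt_integral_of_dominated_of_fderiv_le
      (F := fun x t => F (x, t)) (F' := fun x t => F' (x, t)) (bound := fun _ => C)
      (Metric.closedBall_mem_nhds x one_pos) ?_ ?_ ?_ ?_ ?_ ?_
    · exact Eventually.of_forall fun y =>
        (hc.comp (by fun_prop : Continuous fun t : ℝ => (y, t))).aestronglyMeasurable
    · exact (hc.comp (by fun_prop : Continuous fun t : ℝ => (x, t))).intervalIntegrable _ _
    · exact (hcF'.comp (by fun_prop : Continuous fun t : ℝ => (x, t))).aestronglyMeasurable
    · refine Eventually.of_forall fun t ht y hy => hC (y, t) ⟨hy, ?_⟩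
      rw [uIoc_of_le zero_le_one] at ht
      exact ⟨ht.1.le, ht.2⟩
    · exact intervalIntegrable_const
    · refine Eventually.of_forall fun t _ y _ => ?_
      exact (hd (y, t)).hasFDerivAt.comp y (hasFDerivAt_prodMk_left y t)

theorem aux_hadamard {n : ℕ} (g : V n → ℝ) (hg : ContDiff ℝ 1 g) (a v : V n) :
    g (a + v) - g a = ∑ j, v j * ∫ t in (0:ℝ)..1, fderiv ℝ g (a + t • v) (eb j) := by
  have hd : Differentiable ℝ g := hg.differentiable (by simp)
  have hc : Continuous (fderiv ℝ g) := hg.continuous_fderiv (by simp)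
  have hcj : ∀ w : V n, Continuous fun t : ℝ => fderiv ℝ g (a + t • v) w := fun w =>
    (hc.comp (by fun_prop : Continuous fun t : ℝ => a + t • v)).clm_apply continuous_const
  have hder : ∀ t : ℝ, HasDerivAt (fun t : ℝ => g (a + t • v)) (fderiv ℝ g (a + t • v) v) t := by
    intro t
    have h1 : HasDerivAt (fun t : ℝ => a + t • v) v t := by
      simpa using ((hasDerivAt_id t).smul_const v).const_add a
    exact (hd _).hasFDerivAt.comp_hasDerivAt t h1
  have h := intervalIntegral.integral_eq_sub_of_hasDerivAt (a := 0) (b := 1)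
    (fun t _ => hder t) ((hcj v).intervalIntegrable _ _)
  simp only [one_smul, zero_smul, add_zero] at h
  rw [← h]
  have hv : v = ∑ j, v j • (eb j : V n) := by
    ext k; simp [eb, Finset.sum_apply, Pi.single_apply]
  have : ∀ t : ℝ, fderiv ℝ g (a + t • v) v = ∑ j, v j * fderiv ℝ g (a + t • v) (eb j) := by
    intro t
    conv_lhs => rw [hv, map_sum]
    rw [← hv]
    simp
  simp_rw [this]
  rw [intervalIntegral.integral_finsetSum]
  · simp
  · intro j _
    exact ((hcj (eb j)).const_mul _).intervalIntegrable _ _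

theorem aux_rep {n : ℕ} (g : V n → ℝ) (hg : ContDiff ℝ 3 g) (h0 : g 0 = 0)
    (hax : ∀ (j : Fin n) (s : ℝ), g (s • eb j) = 0) :
    ∃ c : Fin n → Fin n → V n → ℝ, (∀ j k, ContDiff ℝ 1 (c j k)) ∧
      ∀ u, g u = ∑ j, ∑ k, if j = k then 0 else c j k u * u j * u k := by
  let h : Fin n → V n → ℝ := fun j u => ∫ t in (0:ℝ)..1, fderiv ℝ g (t • u) (eb j)
  have hg' : ContDiff ℝ (2:ℕ) (fderiv ℝ g) := hg.fderiv_right (by norm_num)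
  have hh : ∀ j, ContDiff ℝ (2:ℕ) (h j) := by
    intro j
    refine aux_param 2 (fun p : V n × ℝ => fderiv ℝ g (p.2 • p.1) (eb j)) ?_
    exact (hg'.comp (by fun_prop : ContDiff ℝ (2:ℕ) fun p : V n × ℝ => p.2 • p.1)).clm_apply
      contDiff_const
  have hrep : ∀ u, g u = ∑ j, u j * h j u := by
    intro u
    have := aux_hadamard g (hg.of_le (by norm_num)) 0 u
    simpa [h0] using this
  have hz : ∀ u : V n, ∀ j, u j * h j (u j • eb j) = 0 := by
    intro u j
    have := hrep (u j • eb j)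
    rw [hax, Finset.sum_eq_single j] at this
    · simpa [eb] using this.symm
    · intro b _ hb
      simp [eb, hb]
    · simp
  let w : Fin n → V n → V n := fun j u => u - u j • eb j
  let c : Fin n → Fin n → V n → ℝ := fun j k u =>
    ∫ t in (0:ℝ)..1, fderiv ℝ (h j) (u j • eb j + t • w j u) (eb k)
  refine ⟨c, ?_, ?_⟩
  · intro j k
    have hh' : ContDiff ℝ (1:ℕ) (fderiv ℝ (h j)) := (hh j).fderiv_right (by norm_num)
    have := aux_param 1 (fun p : V n × ℝ =>
      fderiv ℝ (h j) (p.1 j • eb j + p.2 • (p.1 - p.1 j • eb j)) (eb k)) (by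
        refine (hh'.comp (?_ : ContDiff ℝ (1:ℕ) fun p : V n × ℝ =>
          p.1 j • (eb j : V n) + p.2 • (p.1 - p.1 j • eb j))).clm_apply contDiff_const
        have hj : ContDiff ℝ (1:ℕ) fun p : V n × ℝ => p.1 j := by fun_prop
        fun_prop)
    exact_mod_cast this
  · intro u
    rw [hrep]
    refine Finset.sum_congr rfl fun j _ => ?_
    have h2 := aux_hadamard (h j) ((hh j).of_le (by norm_num)) (u j • eb j) (w j u)
    have h3 : u j • eb j + w j u = u := by simp [w]
    rw [h3] at h2
    have h4 : u j * h j u = u j * (h j u - h j (u j • eb j)) := by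
      rw [mul_sub, hz]; ring
    rw [h4, h2, Finset.mul_sum]
    refine Finset.sum_congr rfl fun k _ => ?_
    by_cases hjk : j = k
    · subst hjk
      simp [w, eb]
    · have : w j u k = u k := by simp [w, eb, Ne.symm hjk]
      rw [if_neg hjk, this]
      simp only [c]
      ring

theorem aux_eunorm_axis {n : ℕ} (j : Fin n) (s : ℝ) : eunorm (s • (eb j : V n)) = |s| := by
  have : ∑ i, (s • (eb j : V n)) i ^ 2 = s ^ 2 := by
    rw [Finset.sum_eq_single j] <;> simp +contextual [eb]
  rw [eunorm, this, Real.sqrt_sq_eq_abs]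

theorem aux_continuous_eunorm {n : ℕ} : Continuous (eunorm : V n → ℝ) := by
  unfold eunorm; fun_prop

theorem aux_norm_le {n : ℕ} (u : V n) : ‖u‖ ≤ eunorm u := by
  refine (pi_norm_le_iff_of_nonneg (Real.sqrt_nonneg _)).2 fun i => ?_
  refine Real.abs_le_sqrt ?_
  exact Finset.single_le_sum (f := fun i => u i ^ 2) (fun i _ => sq_nonneg _) (Finset.mem_univ i)

/-- **The representation (2.22) of the inhomogeneous term**.  In normalized
coordinates, if `B` satisfies the matching condition, then for each `i` and
all `|u|` small, `b_i(u) = l_i(u)B(u)` can be written as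
`b_i(u) = Σ_{j≠k} b_{ijk}(u) u_j u_k` with `C¹` functions `b_{ijk}`. -/
theorem stmt15 {n : ℕ} (S : HypSys n) (hNorm : S.Normalized) (hMatch : S.Matching) :
    ∃ δ' : ℝ, 0 < δ' ∧ δ' ≤ S.δ ∧
    ∃ bfun : Fin n → Fin n → Fin n → V n → ℝ,
      (∀ i j k : Fin n, ContDiffOn ℝ 1 (bfun i j k) {u : V n | eunorm u < δ'}) ∧
      ∀ u : V n, eunorm u < δ' → ∀ i : Fin n,
        S.bcoef i u = ∑ j : Fin n, ∑ k : Fin n,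
          if j = k then 0 else bfun i j k u * u j * u k := by
  have hU : IsOpen {u : V n | eunorm u < S.δ} := isOpen_lt aux_continuous_eunorm continuous_const
  have h0U : (0 : V n) ∈ {u : V n | eunorm u < S.δ} := by
    simpa [eunorm] using S.δ_pos
  obtain ⟨r, hr, hrU⟩ := Metric.isOpen_iff.1 hU 0 h0U
  let χ : ContDiffBump (0 : V n) := ⟨r / 4, r / 2, by positivity, by linarith⟩
  have hb : ∀ i, ContDiffOn ℝ 3 (S.bcoef i) {u : V n | eunorm u < S.δ} := by
    intro i
    have hl : ContDiffOn ℝ 3 (S.l i) {u | eunorm u < S.δ} :=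
      (S.smooth_l i).of_le (WithTop.coe_le_coe.2 (le_top : (3 : ℕ∞) ≤ ⊤))
    have hB : ContDiffOn ℝ 3 S.B {u | eunorm u < S.δ} :=
      S.smooth_B.of_le (WithTop.coe_le_coe.2 (le_top : (3 : ℕ∞) ≤ ⊤))
    unfold HypSys.bcoef dotProduct
    exact ContDiffOn.sum fun j _ => (contDiffOn_pi.1 hl j).mul (contDiffOn_pi.1 hB j)
  have hg : ∀ i, ContDiff ℝ 3 fun u => χ u * S.bcoef i u := by
    intro i
    rw [contDiff_iff_contDiffAt]
    intro u
    by_cases hu : u ∈ Metric.ball (0 : V n) r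
    · exact χ.contDiffAt.mul ((hb i).contDiffAt (hU.mem_nhds (hrU hu)))
    · have hu' : u ∉ tsupport χ := by
        rw [χ.tsupport_eq]
        intro h
        apply hu
        have : χ.rOut < r := by simp only [χ]; linarith
        exact Metric.closedBall_subset_ball this h
      have he : (fun u => χ u * S.bcoef i u) =ᶠ[𝓝 u] fun _ => 0 := by
        filter_upwards [notMem_tsupport_iff_eventuallyEq.1 hu'] with y hy
        simp [hy]
      exact contDiffAt_const.congr_of_eventuallyEq he
  have hax : ∀ i j (s : ℝ), χ (s • eb j) * S.bcoef i (s • eb j) = 0 := by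
    intro i j s
    by_cases hs : |s| < S.δ
    · simp [HypSys.bcoef, hMatch j s hs]
    · have : r ≤ dist (s • eb j : V n) 0 := by
        by_contra hlt
        have := hrU (Metric.mem_ball.2 (not_le.1 hlt))
        rw [Set.mem_ofPred_eq, aux_eunorm_axis] at this
        exact hs this
      rw [χ.zero_of_le_dist, zero_mul]
      have : χ.rOut < r := by simp only [χ]; linarith
      linarith
  have h0 : ∀ i, χ 0 * S.bcoef i 0 = 0 := by
    intro i
    simpa using hax i i 0
  choose c hc hrep using fun i => aux_rep _ (hg i) (h0 i) (hax i)
  refine ⟨min S.δ (r / 4), lt_min S.δ_pos (by positivity), min_le_left _ _, c,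
    fun i j k => (hc i j k).contDiffOn, fun u hu i => ?_⟩
  rw [← hrep i u, χ.one_of_mem_closedBall, one_mul]
  rw [mem_closedBall_zero_iff]
  exact (aux_norm_le u).trans (hu.le.trans (min_le_right _ _))
end
end
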